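/- Let r > 0 and 0 < b < r be real numbers, let D = {x + iy ∈ ℂ : x²/(r+b)² + y²/(r−b)² ≤ 1} be the closed ellipse with semi-axes r+b and r−b, and let γ(θ) = (r+b)·cos θ + i·(r−b)·sin θ for θ ∈ [0, 2π] parametrize its boundary. Then for every function f : ℂ → ℂ holomorphic on an open set containing D, ∫_D f dA = (1/(2i)) · ∫₀^{2π} f(γ(θ)) · conj(γ(θ)) · γ′(θ) dθ; that is, the area integral of f over D equals the contour integral (1/(2i)) ∮_{∂D} f(z)·conj(z) dz. -/

import Mathlib

open MeasureTheory

/-!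
In the coordinates `w = t γ(θ)`, `0 ≤ t ≤ 1`, of a region that is star-shaped about the origin, the
form `f(w) conj(w) dw` becomes `P dθ - Q dt`, and holomorphy of `f` makes the terms with `f'` cancel
in `∂P/∂t + ∂Q/∂θ`, which leaves `2i f(w)` times the Jacobian `t Im(conj(γ) γ')`. The divergence
theorem on the coordinate rectangle thus proves Green's formula, and it needs `f` to be
differentiable only inside the region. The ellipse is the image of the unit disc under the
real-linear map `L z = r z + b conj(z)`; along `γ = L(exp(iθ))` the quantity `Im(conj(γ) γ')` is
constantly `det L`, so the integral in the coordinates `(t, θ)` is the area integral over the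
ellipse, by polar coordinates on the disc.
-/

section

open Complex Metric Set
open scoped ComplexConjugate Real

variable {E F : Type*} [NormedAddCommGroup E] [NormedSpace ℂ E]
  [NormedAddCommGroup F] [NormedSpace ℝ F]
  {f : ℂ → E} {γ : ℝ → ℂ} {L : ℂ →L[ℝ] ℂ}

theorem hasDerivAt_fderiv_apply_one_zero {g : ℝ × ℝ → F} {p : ℝ × ℝ}
    (hg : DifferentiableAt ℝ g p) :
    HasDerivAt (fun t => g (t, p.2)) (fderiv ℝ g p (1, 0)) p.1 :=
  hg.hasFDerivAt.comp_hasDerivAt p.1 ((hasDerivAt_id p.1).prodMk (hasDerivAt_const p.1 p.2))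

theorem hasDerivAt_fderiv_apply_zero_one {g : ℝ × ℝ → F} {p : ℝ × ℝ}
    (hg : DifferentiableAt ℝ g p) :
    HasDerivAt (fun θ => g (p.1, θ)) (fderiv ℝ g p (0, 1)) p.2 :=
  hg.hasFDerivAt.comp_hasDerivAt p.2 ((hasDerivAt_const p.2 p.1).prodMk (hasDerivAt_id p.2))

/-- The coefficient of `dθ` in the pullback of the form `f(w) conj(w) dw` under
`(t, θ) ↦ w = t γ(θ)`; it is the `t`-component of the vector field to which the divergence theorem
is applied. -/
noncomputable def radialFlux (f : ℂ → E) (γ : ℝ → ℂ) (p : ℝ × ℝ) : E :=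
  (p.1 ^ 2 * (conj (γ p.2) * deriv γ p.2)) • f (p.1 * γ p.2)

/-- Minus the coefficient of `dt` in the pullback of the form `f(w) conj(w) dw` under
`(t, θ) ↦ w = t γ(θ)`; it is the `θ`-component of the vector field to which the divergence theorem
is applied. -/
noncomputable def angularFlux (f : ℂ → E) (γ : ℝ → ℂ) (p : ℝ × ℝ) : E :=
  -((p.1 * (conj (γ p.2) * γ p.2)) • f (p.1 * γ p.2))

theorem differentiableAt_radialFlux (hγ : ContDiff ℝ 2 γ) {p : ℝ × ℝ}
    (hf : DifferentiableAt ℂ f (p.1 * γ p.2)) : DifferentiableAt ℝ (radialFlux f γ) p := by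
  have hγ₁ : Differentiable ℝ γ := hγ.differentiable two_ne_zero
  have : Differentiable ℝ (deriv γ) := hγ.differentiable_deriv_two
  have hfp : DifferentiableAt ℝ (fun p : ℝ × ℝ => f (p.1 * γ p.2)) p :=
    (hf.restrictScalars ℝ).fun_comp' p (by fun_prop)
  exact DifferentiableAt.smul (by fun_prop) hfp

theorem differentiableAt_angularFlux (hγ : Differentiable ℝ γ) {p : ℝ × ℝ}
    (hf : DifferentiableAt ℂ f (p.1 * γ p.2)) : DifferentiableAt ℝ (angularFlux f γ) p := by
  have hfp : DifferentiableAt ℝ (fun p : ℝ × ℝ => f (p.1 * γ p.2)) p :=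
    (hf.restrictScalars ℝ).fun_comp' p (by fun_prop)
  exact (DifferentiableAt.smul (by fun_prop) hfp).neg

theorem hasDerivAt_radialFlux {p : ℝ × ℝ} (hf : DifferentiableAt ℂ f (p.1 * γ p.2)) :
    HasDerivAt (fun t => radialFlux f γ (t, p.2))
      ((2 * p.1 * (conj (γ p.2) * deriv γ p.2)) • f (p.1 * γ p.2) +
        (p.1 ^ 2 * (conj (γ p.2) * γ p.2) * deriv γ p.2) • deriv f (p.1 * γ p.2)) p.1 := by
  have ht : HasDerivAt (fun t : ℝ => (t : ℂ)) 1 p.1 := ofRealCLM.hasDerivAt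
  have hft := hf.hasDerivAt.scomp p.1 (ht.mul_const (γ p.2))
  convert! ((ht.pow 2).mul_const (conj (γ p.2) * deriv γ p.2)).smul hft using 1
  simp only [Pi.pow_apply, one_mul, Nat.cast_ofNat, Nat.add_one_sub_one, pow_one, mul_one,
    Function.comp_apply]
  module

theorem hasDerivAt_angularFlux {p : ℝ × ℝ} (hγ : DifferentiableAt ℝ γ p.2)
    (hf : DifferentiableAt ℂ f (p.1 * γ p.2)) :
    HasDerivAt (fun θ => angularFlux f γ (p.1, θ))
      (-((p.1 * (conj (deriv γ p.2) * γ p.2 + conj (γ p.2) * deriv γ p.2)) • f (p.1 * γ p.2) +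
        (p.1 ^ 2 * (conj (γ p.2) * γ p.2) * deriv γ p.2) • deriv f (p.1 * γ p.2))) p.2 := by
  have hθ := hγ.hasDerivAt
  have hfθ := hf.hasDerivAt.scomp p.2 (hθ.const_mul (p.1 : ℂ))
  convert! (((hθ.star.mul hθ).const_mul (p.1 : ℂ)).smul hfθ).neg using 1
  simp only [RCLike.star_def, Pi.mul_apply, Function.comp_apply]
  module

theorem fderiv_radialFlux_add_fderiv_angularFlux (hγ : ContDiff ℝ 2 γ) {p : ℝ × ℝ}
    (hf : DifferentiableAt ℂ f (p.1 * γ p.2)) :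
    fderiv ℝ (radialFlux f γ) p (1, 0) + fderiv ℝ (angularFlux f γ) p (0, 1) =
      (2 * I) • (p.1 * (conj (γ p.2) * deriv γ p.2).im) • f (p.1 * γ p.2) := by
  have hγ₁ : Differentiable ℝ γ := hγ.differentiable two_ne_zero
  have hjacobian : 2 * I * ((p.1 * (conj (γ p.2) * deriv γ p.2).im : ℝ) : ℂ) =
      p.1 * (conj (γ p.2) * deriv γ p.2 - conj (deriv γ p.2) * γ p.2) := by
    have him := sub_conj (conj (γ p.2) * deriv γ p.2)
    rw [map_mul, conj_conj, mul_comm (γ p.2)] at him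
    rw [him]
    push_cast
    ring
  rw [(hasDerivAt_fderiv_apply_one_zero (differentiableAt_radialFlux hγ hf)).unique
      (hasDerivAt_radialFlux hf),
    (hasDerivAt_fderiv_apply_zero_one (differentiableAt_angularFlux hγ₁ hf)).unique
      (hasDerivAt_angularFlux (hγ₁ p.2) hf),
    ← Complex.coe_smul, smul_smul, hjacobian]
  module

theorem intervalIntegral_conj_mul_deriv_smul_eq_setIntegral (hγ : ContDiff ℝ 2 γ) {a b : ℝ}
    (hab : a ≤ b) (hclosed : γ a = γ b)
    (hfc : ContinuousOn (fun p : ℝ × ℝ => f (p.1 * γ p.2)) (Icc (0, a) (1, b)))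
    (hfd : ∀ p ∈ Ioo (0 : ℝ) 1 ×ˢ Ioo a b, DifferentiableAt ℂ f (p.1 * γ p.2)) :
    ∫ θ in a..b, (conj (γ θ) * deriv γ θ) • f (γ θ) =
      (2 * I) • ∫ p in Icc (0, a) (1, b),
        (p.1 * (conj (γ p.2) * deriv γ p.2).im) • f (p.1 * γ p.2) := by
  let divergence (p : ℝ × ℝ) : E :=
    fderiv ℝ (radialFlux f γ) p (1, 0) + fderiv ℝ (angularFlux f γ) p (0, 1)
  let density (p : ℝ × ℝ) : E :=
    (2 * I) • (p.1 * (conj (γ p.2) * deriv γ p.2).im) • f (p.1 * γ p.2)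
  have hγ₀ : Continuous γ := hγ.continuous
  have hγ₁ : Continuous (deriv γ) := hγ.continuous_deriv one_le_two
  have hIoo : Ioo (0 : ℝ) 1 ×ˢ Ioo a b =ᵐ[volume] Icc (0, a) (1, b) := by
    rw [Icc_prod_eq]
    exact Measure.set_prod_ae_eq Ioo_ae_eq_Icc Ioo_ae_eq_Icc
  have hmeas : MeasurableSet (Ioo (0 : ℝ) 1 ×ˢ Ioo a b) :=
    measurableSet_Ioo.prod measurableSet_Ioo
  have hdiv : EqOn divergence density (Ioo (0 : ℝ) 1 ×ˢ Ioo a b) :=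
    fun p hp => fderiv_radialFlux_add_fderiv_angularFlux hγ (hfd p hp)
  have hdensity : IntegrableOn density (Icc (0, a) (1, b)) := by
    have hjacobian : Continuous fun p : ℝ × ℝ => p.1 * (conj (γ p.2) * deriv γ p.2).im := by
      fun_prop
    exact ((hjacobian.continuousOn.smul hfc).const_smul (2 * I)).integrableOn_compact isCompact_Icc
  have hdivergence : IntegrableOn divergence (Icc (0, a) (1, b)) :=
    ((hdensity.congr_set_ae hIoo).congr_fun hdiv.symm hmeas).congr_set_ae hIoo.symm
  have hstokes := integral_divergence_prod_Icc_of_hasFDerivAt_of_le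
    (radialFlux f γ) (angularFlux f γ) (fderiv ℝ (radialFlux f γ)) (fderiv ℝ (angularFlux f γ))
    (0, a) (1, b) ⟨zero_le_one, hab⟩
    (ContinuousOn.smul (by fun_prop) hfc) (ContinuousOn.smul (by fun_prop) hfc).neg
    (fun p hp => (differentiableAt_radialFlux hγ (hfd p hp)).hasFDerivAt)
    (fun p hp => (differentiableAt_angularFlux (hγ.differentiable two_ne_zero)
      (hfd p hp)).hasFDerivAt)
    hdivergence
  rw [← setIntegral_congr_set hIoo, setIntegral_congr_fun hmeas hdiv,
    setIntegral_congr_set hIoo, integral_smul] at hstokes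
  simpa [radialFlux, angularFlux, hclosed] using hstokes.symm

theorem setIntegral_closedBall_eq_setIntegral_circleMap (f : ℂ → F) (c : ℂ) (R : ℝ) :
    ∫ z in closedBall c R, f z =
      ∫ p in Icc (0, -π) (R, π), p.1 • f (circleMap c p.1 p.2) := by
  calc
    ∫ z in closedBall c R, f z = ∫ z, (closedBall c R).indicator f (c + z) := by
      rw [integral_add_left_eq_self, integral_indicator measurableSet_closedBall]
    _ = ∫ p in Complex.polarCoord.target,
          p.1 • (closedBall c R).indicator f (c + Complex.polarCoord.symm p) :=
      (Complex.integral_comp_polarCoord_symm _).symm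
    _ = ∫ p in Complex.polarCoord.target,
          (Iic R ×ˢ univ).indicator (fun p => p.1 • f (circleMap c p.1 p.2)) p := by
      refine setIntegral_congr_fun polarCoord.open_target.measurableSet fun p hp => ?_
      have hp₀ : 0 < p.1 := hp.1
      have hsymm : c + Complex.polarCoord.symm p = circleMap c p.1 p.2 := by
        simp [circleMap, exp_mul_I]
      have hmem : circleMap c p.1 p.2 ∈ closedBall c R ↔ p ∈ Iic R ×ˢ univ := by
        simp [circleMap, abs_of_pos hp₀]
      by_cases h : p ∈ Iic R ×ˢ univ <;>
        simp only [hsymm, indicator, hmem, h, if_true, if_false, smul_zero]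
    _ = ∫ p in Icc (0, -π) (R, π), p.1 • f (circleMap c p.1 p.2) := by
      rw [setIntegral_indicator (measurableSet_Iic.prod .univ), Complex.polarCoord_target,
        prod_inter_prod, inter_univ, Ioi_inter_Iic, Icc_prod_eq]
      exact setIntegral_congr_set (Measure.set_prod_ae_eq Ioc_ae_eq_Icc Ioo_ae_eq_Icc)

theorem intervalIntegral_circleMap_neg_pi_pi (g : ℂ → F) (c : ℂ) (R : ℝ) :
    ∫ θ in -π..π, g (circleMap c R θ) = ∫ θ in 0..2 * π, g (circleMap c R θ) := by
  have hperiodic := (periodic_circleMap c R).comp g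
  have hshift := hperiodic.intervalIntegral_add_eq (-π) 0
  rwa [zero_add, show -π + 2 * π = π by ring] at hshift

theorem clm_circleMap_zero (L : ℂ →L[ℝ] ℂ) (t θ : ℝ) :
    L (circleMap 0 t θ) = t * L (circleMap 0 1 θ) := by
  rw [← real_smul, ← map_smul]
  simp [circleMap]

theorem deriv_clm_comp_circleMap (L : ℂ →L[ℝ] ℂ) (c : ℂ) (R θ : ℝ) :
    deriv (fun θ => L (circleMap c R θ)) θ = L (circleMap 0 R θ * I) :=
  (L.hasFDerivAt.comp_hasDerivAt θ (hasDerivAt_circleMap c R θ)).deriv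

theorem det_eq_im_conj_apply_one_mul_apply_I (L : ℂ →L[ℝ] ℂ) :
    L.det = (conj (L 1) * L I).im := by
  rw [ContinuousLinearMap.det, ← LinearMap.det_toMatrix Complex.basisOneI, Matrix.det_fin_two]
  simp only [LinearMap.toMatrix_apply, coe_basisOneI, Matrix.cons_val_zero,
    ContinuousLinearMap.coe_coe, coe_basisOneI_repr, Matrix.cons_val_one, Matrix.cons_val_fin_one,
    mul_im, conj_re, conj_im]
  ring

theorem im_conj_apply_mul_apply_mul_I (L : ℂ →L[ℝ] ℂ) (z : ℂ) :
    (conj (L z) * L (z * I)).im = ‖z‖ ^ 2 * L.det := by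
  have hz : L z = z.re * L 1 + z.im * L I := by
    simp_rw [← real_smul, ← map_smul, ← map_add]
    simp
  have hzI : L (z * I) = z.re * L I - z.im * L 1 := by
    simp_rw [← real_smul, ← map_smul, ← map_sub]
    congr 1
    simp [Complex.ext_iff]
  rw [hz, hzI, det_eq_im_conj_apply_one_mul_apply_I, ← normSq_eq_norm_sq, normSq_apply]
  simp only [map_add, map_mul, conj_ofReal, mul_im, add_re, mul_re, ofReal_re, conj_re, ofReal_im,
    conj_im, add_im, sub_re, sub_im]
  ring

theorem setIntegral_image_closedBall (f : ℂ → F) (hL : L.det ≠ 0) (c : ℂ) (R : ℝ) :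
    ∫ z in L '' closedBall c R, f z =
      |L.det| • ∫ p in Icc (0, -π) (R, π), p.1 • f (L (circleMap c p.1 p.2)) := by
  rw [integral_image_eq_integral_abs_det_fderiv_smul volume measurableSet_closedBall
      (fun z _ => L.hasFDerivAt.hasFDerivWithinAt)
      (L.toContinuousLinearEquivOfDetNeZero hL).injective.injOn,
    integral_smul, setIntegral_closedBall_eq_setIntegral_circleMap]

theorem image_ball_subset_interior_image_closedBall (hL : L.det ≠ 0) (c : ℂ) (R : ℝ) :
    L '' ball c R ⊆ interior (L '' closedBall c R) :=
  interior_maximal (image_mono ball_subset_closedBall)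
    ((L.toContinuousLinearEquivOfDetNeZero hL).toHomeomorph.isOpenMap _ isOpen_ball)

theorem setIntegral_image_closedBall_eq_intervalIntegral (hL : 0 < L.det)
    (hfc : ContinuousOn f (L '' closedBall 0 1))
    (hfd : DifferentiableOn ℂ f (interior (L '' closedBall 0 1))) :
    ∫ z in L '' closedBall 0 1, f z = (1 / (2 * I)) • ∫ θ in 0..2 * π,
      (conj (L (circleMap 0 1 θ)) * deriv (fun θ => L (circleMap 0 1 θ)) θ) •
        f (L (circleMap 0 1 θ)) := by
  have hγ : ContDiff ℝ 2 fun θ => L (circleMap 0 1 θ) := L.contDiff.comp (contDiff_circleMap 0 1)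
  have hcont : ContinuousOn (fun p : ℝ × ℝ => f (p.1 * L (circleMap 0 1 p.2)))
      (Icc (0, -π) (1, π)) := by
    refine hfc.comp (by fun_prop) fun p hp => ?_
    rw [← clm_circleMap_zero]
    exact mem_image_of_mem L (by simpa [circleMap, abs_of_nonneg hp.1.1] using hp.2.1)
  have hdiff : ∀ p ∈ Ioo (0 : ℝ) 1 ×ˢ Ioo (-π) π,
      DifferentiableAt ℂ f (p.1 * L (circleMap 0 1 p.2)) := by
    intro p hp
    refine hfd.differentiableAt (isOpen_interior.mem_nhds
      (image_ball_subset_interior_image_closedBall hL.ne' 0 1 ?_))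
    rw [← clm_circleMap_zero]
    exact mem_image_of_mem L (by simpa [circleMap, abs_of_pos hp.1.1] using hp.1.2)
  have hjacobian (θ : ℝ) :
      (conj (L (circleMap 0 1 θ)) * deriv (fun θ => L (circleMap 0 1 θ)) θ).im = L.det := by
    rw [deriv_clm_comp_circleMap, im_conj_apply_mul_apply_mul_I]
    simp
  have hgreen := intervalIntegral_conj_mul_deriv_smul_eq_setIntegral hγ
    (by linarith [Real.pi_pos]) (by simp [circleMap]) hcont hdiff
  have hshift := intervalIntegral_circleMap_neg_pi_pi
    (fun u => (conj (L u) * L (u * I)) • f (L u)) 0 1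
  simp_rw [← deriv_clm_comp_circleMap L 0 1] at hshift
  rw [← hshift, hgreen, smul_smul, one_div_mul_cancel (by simp), one_smul,
    setIntegral_image_closedBall f hL.ne' 0 1, abs_of_pos hL, ← integral_smul]
  simp_rw [hjacobian, ← clm_circleMap_zero, smul_smul, mul_comm]

/-- The real-linear map `z ↦ r z + b conj(z)`, which multiplies real parts by `r + b` and imaginary
parts by `r - b`, and so carries the unit disc to the ellipse with these semi-axes. -/
noncomputable def ellipseMap (r b : ℝ) : ℂ →L[ℝ] ℂ :=
  r • ContinuousLinearMap.id ℝ ℂ + b • (conjCLE : ℂ →L[ℝ] ℂ)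

theorem ellipseMap_apply (r b : ℝ) (z : ℂ) :
    ellipseMap r b z = ⟨(r + b) * z.re, (r - b) * z.im⟩ := by
  apply Complex.ext <;> simp [ellipseMap] <;> ring

theorem det_ellipseMap (r b : ℝ) : (ellipseMap r b).det = (r + b) * (r - b) := by
  simp [det_eq_im_conj_apply_one_mul_apply_I, ellipseMap_apply]

theorem ellipseMap_circleMap (r b θ : ℝ) :
    ellipseMap r b (circleMap 0 1 θ) =
      ((r + b) * Real.cos θ : ℝ) + I * ((r - b) * Real.sin θ : ℝ) := by
  apply Complex.ext <;>
    simp [ellipseMap_apply, circleMap, exp_ofReal_mul_I_re, exp_ofReal_mul_I_im,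
      -ofReal_mul, -ofReal_cos, -ofReal_sin]

theorem ellipseMap_image_closedBall {r b : ℝ} (hadd : r + b ≠ 0) (hsub : r - b ≠ 0) :
    ellipseMap r b '' closedBall 0 1 =
      {z : ℂ | z.re ^ 2 / (r + b) ^ 2 + z.im ^ 2 / (r - b) ^ 2 ≤ 1} := by
  have hball (w : ℂ) : w ∈ closedBall 0 1 ↔ w.re ^ 2 + w.im ^ 2 ≤ 1 := by
    rw [mem_closedBall_zero_iff, ← sq_le_one_iff₀ (norm_nonneg w), ← normSq_eq_norm_sq,
      normSq_apply, sq, sq]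
  ext z
  constructor
  · rintro ⟨w, hw, rfl⟩
    simpa [ellipseMap_apply, mul_pow, hadd, hsub] using (hball w).1 hw
  · intro hz
    refine ⟨⟨z.re / (r + b), z.im / (r - b)⟩, (hball _).2 ?_, ?_⟩
    · simpa only [div_pow, mem_ofPred_eq] using hz
    · rw [ellipseMap_apply, mul_div_cancel₀ _ hadd, mul_div_cancel₀ _ hsub]

theorem stmt_11_general {r b : ℝ} (hbr : |b| < r) {D : Set ℂ}
    (hD : D = {z : ℂ | z.re ^ 2 / (r + b) ^ 2 + z.im ^ 2 / (r - b) ^ 2 ≤ 1})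
    (hγ : ∀ θ : ℝ, γ θ = ((r + b) * Real.cos θ : ℝ) + I * ((r - b) * Real.sin θ : ℝ))
    (hfc : ContinuousOn f D) (hfd : DifferentiableOn ℂ f (interior D)) :
    ∫ z in D, f z =
      (1 / (2 * I)) • ∫ θ in 0..2 * π, (conj (γ θ) * deriv γ θ) • f (γ θ) := by
  obtain ⟨hneg, hpos⟩ := abs_lt.1 hbr
  have hadd : 0 < r + b := by linarith
  have hsub : 0 < r - b := by linarith
  have hdet : 0 < (ellipseMap r b).det := det_ellipseMap r b ▸ mul_pos hadd hsub
  obtain rfl : γ = fun θ => ellipseMap r b (circleMap 0 1 θ) :=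
    funext fun θ => (hγ θ).trans (ellipseMap_circleMap r b θ).symm
  rw [← ellipseMap_image_closedBall hadd.ne' hsub.ne'] at hD
  subst hD
  exact setIntegral_image_closedBall_eq_intervalIntegral hdet hfc hfd

end

/-- For the closed ellipse `D` with boundary
`γ(θ) = (r+b)cos θ + i(r−b)sin θ` and any `f` holomorphic on an open set containing
`D`, the area integral of `f` over `D` equals the contour integral
`(1/(2i)) ∫₀^{2π} f(γ(θ))·conj(γ(θ))·γ′(θ) dθ`. -/
theorem stmt_11 (r b : ℝ) (hb : 0 < b) (hbr : b < r)
    (D : Set ℂ)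
    (hD : D = {z : ℂ | z.re ^ 2 / (r + b) ^ 2 + z.im ^ 2 / (r - b) ^ 2 ≤ 1})
    (γ : ℝ → ℂ)
    (hγ : ∀ θ : ℝ, γ θ = ((r + b) * Real.cos θ : ℝ) + Complex.I * ((r - b) * Real.sin θ : ℝ))
    (f : ℂ → ℂ) (U : Set ℂ) (hU : IsOpen U) (hDU : D ⊆ U)
    (hf : DifferentiableOn ℂ f U) :
    ∫ z in D, f z
      = (1 / (2 * Complex.I)) * ∫ θ in (0 : ℝ)..(2 * Real.pi),
          f (γ θ) * (starRingEnd ℂ) (γ θ) * deriv γ θ := by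
  simpa only [smul_eq_mul, mul_assoc, mul_comm, mul_left_comm] using
    stmt_11_general ((abs_of_pos hb).trans_lt hbr) hD hγ
      (hf.continuousOn.mono hDU) (hf.mono (interior_subset.trans hDU))
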